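/- For every ℓ ≥ 1, the number of 321-avoiding reverse-alternating (down-up) permutations of length 2ℓ+1 that end in their largest entry is the Catalan number C_ℓ, and the number that begin with their smallest entry is 0. -/

import Mathlib

/-- `w` is an alternating (up-down) permutation: `w 0 < w 1 > w 2 < ⋯`. -/
def UpDown {n : ℕ} (w : Equiv.Perm (Fin n)) : Prop :=
  ∀ i : ℕ, ∀ h : i + 1 < n,
    if i % 2 = 0 then w ⟨i, Nat.lt_of_succ_lt h⟩ < w ⟨i + 1, h⟩
    else w ⟨i + 1, h⟩ < w ⟨i, Nat.lt_of_succ_lt h⟩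

/-- `w` is a reverse-alternating (down-up) permutation: `w 0 > w 1 < w 2 > ⋯`. -/
def DownUp {n : ℕ} (w : Equiv.Perm (Fin n)) : Prop :=
  ∀ i : ℕ, ∀ h : i + 1 < n,
    if i % 2 = 0 then w ⟨i + 1, h⟩ < w ⟨i, Nat.lt_of_succ_lt h⟩
    else w ⟨i, Nat.lt_of_succ_lt h⟩ < w ⟨i + 1, h⟩

/-- The set of occurrences of the pattern 321 in `w`. -/
def occ321 {n : ℕ} (w : Equiv.Perm (Fin n)) : Set (Fin n × Fin n × Fin n) :=
  {t | t.1 < t.2.1 ∧ t.2.1 < t.2.2 ∧ w t.2.2 < w t.2.1 ∧ w t.2.1 < w t.1}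

/-- The set of occurrences of the pattern 123 in `w`. -/
def occ123 {n : ℕ} (w : Equiv.Perm (Fin n)) : Set (Fin n × Fin n × Fin n) :=
  {t | t.1 < t.2.1 ∧ t.2.1 < t.2.2 ∧ w t.1 < w t.2.1 ∧ w t.2.1 < w t.2.2}

/-!
Appending a new largest entry to a 321-avoiding down-up permutation of even length keeps both
properties, so it suffices to count the 321-avoiding down-up permutations of length `2 * l`. In such
a permutation the peaks (even positions) increase from left to right, and so do the valleys (odd
positions); conversely this, together with every valley lying below the peak just before it, is
enough. The permutation is therefore determined by which values are valleys. Reading the values in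
increasing order and writing `U` for a valley and `D` for a peak, the condition that the `i`-th `U`
comes before the `i`-th `D` for every `i` says exactly that the word is a Dyck word.
-/

section Domination

open scoped Finset

variable {ι α : Type*} [Fintype ι] [LinearOrder ι] [LinearOrder α]

theorem forall_le_iff_card_filter_le_le {a b : ι → α} (ha : Monotone a) (hb : Monotone b) :
    (∀ i, a i ≤ b i) ↔ ∀ x, #{i | b i ≤ x} ≤ #{i | a i ≤ x} := by
  refine ⟨fun hab x => Finset.card_le_card fun i hi => ?_, fun hcard i => ?_⟩
  · simp only [Finset.mem_filter_univ] at hi ⊢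
    exact (hab i).trans hi
  · by_contra! hi
    -- At `x = b i` the left side counts every index `≤ i`, the right side only indices `< i`.
    refine (hcard (b i)).not_gt (Finset.card_lt_card ?_)
    refine Finset.ssubset_iff_of_subset (fun j hj => ?_) |>.2 ⟨i, by simp, by simpa using hi⟩
    simp only [Finset.mem_filter_univ] at hj ⊢
    exact hb (ha.reflect_lt (hj.trans_lt hi)).le

end Domination

section Shuffle

open scoped Finset

variable {κ ι α : Type*} {m n : ℕ}

/-- `σ` interleaves increasing sequences indexed by `ι`, one for each letter of `κ`, into a single
arrangement of `α`; the value `σ (s, i)` is the `i`-th term of the sequence of `s`. -/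
def IsShuffle [Preorder ι] [Preorder α] (σ : κ × ι ≃ α) : Prop :=
  ∀ s, StrictMono fun i => σ (s, i)

theorem IsShuffle.eq_of_fst_symm_eq [LinearOrder ι] [WellFoundedLT ι] [Preorder α]
    {σ τ : κ × ι ≃ α} (hσ : IsShuffle σ) (hτ : IsShuffle τ)
    (h : ∀ v, (σ.symm v).1 = (τ.symm v).1) : σ = τ := by
  have range_eq (ρ : κ × ι ≃ α) (s : κ) :
      Set.range (fun i => ρ (s, i)) = {v | (ρ.symm v).1 = s} := by
    ext v
    refine ⟨?_, fun hv => ⟨(ρ.symm v).2, ?_⟩⟩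
    · rintro ⟨i, rfl⟩
      simp
    · have fst_eq : (ρ.symm v).1 = s := hv
      simp [← fst_eq]
  ext ⟨s, i⟩
  refine congrFun ((StrictMono.range_inj (hσ s) (hτ s)).1 ?_) i
  simp only [range_eq, h]

theorem exists_isShuffle [Fintype α] [LinearOrder α] [DecidableEq κ] (f : α → κ)
    (hf : ∀ s, Fintype.card {v // f v = s} = m) :
    ∃ σ : κ × Fin m ≃ α, IsShuffle σ ∧ ∀ v, (σ.symm v).1 = f v := by
  let fiberIso (s : κ) : Fin m ≃o {v // f v = s} := Fintype.orderIsoFinOfCardEq _ (hf s)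
  let σ : κ × Fin m ≃ α :=
    (Equiv.sigmaEquivProd κ (Fin m)).symm.trans
      ((Equiv.sigmaCongrRight fun s => (fiberIso s).toEquiv).trans (Equiv.sigmaFiberEquiv f))
  exact ⟨σ, fun s _ _ hij => (fiberIso s).strictMono hij, fun _ => rfl⟩

/-- The word of an arrangement `σ` of `0, …, n - 1`: its `v`-th letter names the sequence that
contains the value `v`. -/
def shuffleWord (σ : κ × ι ≃ Fin n) : List κ :=
  List.ofFn fun v => (σ.symm v).1

theorem count_take_ofFn [DecidableEq κ] (f : Fin n → κ) (s : κ) (k : ℕ) :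
    ((List.ofFn f).take k).count s = #{v : Fin n | v.val < k ∧ f v = s} := by
  induction n generalizing k with
  | zero => simp
  | succ n ih =>
    cases k with
    | zero => simp
    | succ k =>
      simp only [List.ofFn_succ, List.take_succ_cons, List.count_cons, ih, beq_iff_eq,
        Fin.card_filter_univ_succ, Fin.val_zero, Nat.zero_lt_succ, true_and, Fin.val_succ,
        Nat.add_lt_add_iff_right]
      split_ifs <;> rfl

theorem count_take_shuffleWord [DecidableEq κ] [Fintype ι] (σ : κ × ι ≃ Fin n) (s : κ) (k : ℕ) :
    ((shuffleWord σ).take k).count s = #{i | (σ (s, i)).val < k} := by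
  rw [shuffleWord, count_take_ofFn]
  refine Finset.card_nbij' (fun v => (σ.symm v).2) (fun i => σ (s, i)) ?_ ?_ ?_ ?_
  · intro v hv
    obtain ⟨hvk, rfl⟩ := (Finset.mem_filter_univ v).1 hv
    simpa using hvk
  · intro i hi
    simpa using hi
  · intro v hv
    obtain ⟨-, rfl⟩ := (Finset.mem_filter_univ v).1 hv
    simp
  · intro i _
    simp

theorem count_shuffleWord [DecidableEq κ] [Fintype ι] (σ : κ × ι ≃ Fin n) (s : κ) :
    (shuffleWord σ).count s = Fintype.card ι := by
  have h := count_take_shuffleWord σ s n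
  rw [List.take_of_length_le (by simp [shuffleWord])] at h
  simpa using h

end Shuffle

section DyckWord

open DyckStep

variable {l : ℕ}

theorem IsShuffle.forall_U_lt_D_iff {n : ℕ} {σ : DyckStep × Fin l ≃ Fin n} (hσ : IsShuffle σ) :
    (∀ i, σ (U, i) < σ (D, i)) ↔
      ∀ k, ((shuffleWord σ).take k).count D ≤ ((shuffleWord σ).take k).count U := by
  have lt_iff_le (i : Fin l) : σ (U, i) < σ (D, i) ↔ (σ (U, i)).val ≤ (σ (D, i)).val :=
    (Ne.le_iff_lt (by simp)).symm
  have val_monotone (s : DyckStep) : Monotone fun i => (σ (s, i)).val := (hσ s).monotone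
  simp only [lt_iff_le, count_take_shuffleWord]
  rw [forall_le_iff_card_filter_le_le (val_monotone U) (val_monotone D)]
  refine ⟨fun h k => ?_, fun h x => by simpa only [Nat.lt_add_one_iff] using h (x + 1)⟩
  cases k with
  | zero => simp
  | succ x => simpa only [Nat.lt_add_one_iff] using h x

theorem exists_isShuffle_shuffleWord_eq (p : DyckWord) (hp : p.semilength = l) :
    ∃ σ : DyckStep × Fin l ≃ Fin (2 * l), IsShuffle σ ∧ shuffleWord σ = p.toList := by
  have length_eq : 2 * l = p.toList.length := hp ▸ p.two_mul_semilength_eq_length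
  let f (v : Fin (2 * l)) : DyckStep := p.toList[v]
  have ofFn_f : List.ofFn f = p.toList := List.ext_getElem (by simp [length_eq]) (by simp [f])
  have card_fiber (s : DyckStep) : Fintype.card {v // f v = s} = l := by
    have count_s : p.toList.count s = l := by
      cases s
      · exact hp
      · exact p.semilength_eq_count_D.symm.trans hp
    have h := count_take_ofFn f s (2 * l)
    rw [ofFn_f, List.take_of_length_le length_eq.ge, count_s] at h
    simpa [Fintype.card_subtype] using h.symm
  obtain ⟨σ, hσ, fst_symm⟩ := exists_isShuffle f card_fiber
  exact ⟨σ, hσ, by rw [shuffleWord, funext fst_symm, ofFn_f]⟩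

theorem card_isShuffle_U_lt_D (l : ℕ) :
    Nat.card {σ : DyckStep × Fin l ≃ Fin (2 * l) // IsShuffle σ ∧ ∀ i, σ (U, i) < σ (D, i)} =
      catalan l := by
  rw [← DyckWord.card_dyckWord_semilength_eq_catalan, ← Nat.card_eq_fintype_card]
  let toDyckWord (σ : {σ : DyckStep × Fin l ≃ Fin (2 * l) //
      IsShuffle σ ∧ ∀ i, σ (U, i) < σ (D, i)}) : {p : DyckWord // p.semilength = l} :=
    ⟨⟨shuffleWord σ.1, by simp only [count_shuffleWord], σ.2.1.forall_U_lt_D_iff.1 σ.2.2⟩,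
      (count_shuffleWord σ.1 U).trans (Fintype.card_fin l)⟩
  refine Nat.card_eq_of_bijective toDyckWord ⟨fun σ τ h => ?_, fun ⟨p, hp⟩ => ?_⟩
  · have word_eq : shuffleWord σ.1 = shuffleWord τ.1 := congrArg (fun q => q.1.toList) h
    exact Subtype.ext (σ.2.1.eq_of_fst_symm_eq τ.2.1 (congrFun (List.ofFn_injective word_eq)))
  · obtain ⟨σ, hσ, word_eq⟩ := exists_isShuffle_shuffleWord_eq p hp
    have lt : ∀ i, σ (U, i) < σ (D, i) :=
      hσ.forall_U_lt_D_iff.2 (word_eq ▸ p.count_D_le_count_U)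
    exact ⟨⟨σ, hσ, lt⟩, Subtype.ext (DyckWord.ext word_eq)⟩

end DyckWord

section Permutations

open DyckStep

variable {l n : ℕ}

theorem occ321_eq_empty_iff {w : Equiv.Perm (Fin n)} :
    occ321 w = ∅ ↔ ∀ i j k, i < j → j < k → w j < w i → w j ≤ w k := by
  simp only [occ321, Set.eq_empty_iff_forall_notMem, Set.mem_ofPred_eq, Prod.forall, not_and,
    not_lt]
  exact forall₃_congr fun i j k => forall₂_congr fun _ _ => ⟨fun h hji => le_of_not_gt fun hkj =>
    (h hkj).not_gt hji, fun h hkj => le_of_not_gt fun hji => (h hji).not_gt hkj⟩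

/-- Splits the positions `0, …, 2 * l - 1` by parity: the even ones, where a down-up permutation
has its peaks, are labelled `D`, and the odd ones, where it has its valleys, are labelled `U`. -/
def parityEquiv (l : ℕ) : DyckStep × Fin l ≃ Fin (2 * l) where
  toFun
    | (D, i) => ⟨2 * i, by omega⟩
    | (U, i) => ⟨2 * i + 1, by omega⟩
  invFun j := (if j.val % 2 = 0 then D else U, ⟨j / 2, by omega⟩)
  left_inv := by
    rintro ⟨_ | _, i⟩
    · simp [Nat.add_mod, Nat.mul_add_div]
    · simp
  right_inv j := by
    rcases Nat.mod_two_eq_zero_or_one j with h | h <;> ext <;> simp [h] <;> omega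

theorem isShuffle_parityEquiv_trans_iff {w : Equiv.Perm (Fin (2 * l))} :
    IsShuffle ((parityEquiv l).trans w) ↔
      ∀ i j : Fin (2 * l), i < j → i.val % 2 = j.val % 2 → w i < w j := by
  constructor
  · intro hw i j hij hmod
    have fst_eq : ((parityEquiv l).symm j).1 = ((parityEquiv l).symm i).1 := by
      simp [parityEquiv, hmod]
    have snd_lt : ((parityEquiv l).symm i).2 < ((parityEquiv l).symm j).2 := by
      have hdiv : i.val / 2 < j.val / 2 := by omega
      simpa [parityEquiv] using hdiv
    have apply_j : parityEquiv l (((parityEquiv l).symm i).1, ((parityEquiv l).symm j).2) = j := by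
      simp [← fst_eq]
    have h := hw ((parityEquiv l).symm i).1 snd_lt
    simpa [apply_j] using h
  · rintro hw (_ | _) i j hij
    · exact hw _ _ (by simpa [parityEquiv] using hij) (by simp [parityEquiv, Nat.add_mod])
    · exact hw _ _ (by simpa [parityEquiv] using hij) (by simp [parityEquiv])

theorem DownUp.valley_lt_peak {w : Equiv.Perm (Fin (2 * l))} (hw : DownUp w) (i : Fin l) :
    w (parityEquiv l (U, i)) < w (parityEquiv l (D, i)) := by
  have h := hw (2 * i) (by omega)
  rwa [if_pos (by omega)] at h

theorem DownUp.isShuffle {w : Equiv.Perm (Fin (2 * l))} (hw : DownUp w) (ho : occ321 w = ∅) :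
    IsShuffle ((parityEquiv l).trans w) := by
  rw [occ321_eq_empty_iff] at ho
  refine isShuffle_parityEquiv_trans_iff.2 fun i j hij hmod => ?_
  by_contra! hji
  replace hji : w j < w i := hji.lt_of_ne (by simpa using hij.ne')
  -- Two peaks in decreasing order form a 321 with the valley after the second one, two valleys
  -- with the peak before the first one.
  rcases Nat.mod_two_eq_zero_or_one i with hi | hi
  · have descent : w ⟨j + 1, by omega⟩ < w j := by
      simpa [← hmod, hi] using hw j (by omega)
    exact (ho i j ⟨j + 1, by omega⟩ hij (Nat.lt_succ_self j.val) hji).not_gt descent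
  · have descent : w i < w ⟨i - 1, by omega⟩ := by
      have h := hw (i - 1) (by omega)
      rw [if_pos (by omega)] at h
      simpa only [Nat.sub_add_cancel (show 1 ≤ i.val by omega)] using h
    exact (ho ⟨i - 1, by omega⟩ i j (Nat.sub_lt (by omega) one_pos) hij descent).not_gt hji

theorem occ321_eq_empty_of_isShuffle {w : Equiv.Perm (Fin (2 * l))}
    (hw : IsShuffle ((parityEquiv l).trans w)) : occ321 w = ∅ := by
  rw [isShuffle_parityEquiv_trans_iff] at hw
  refine occ321_eq_empty_iff.2 fun i j k hij hjk hji => ?_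
  have hij_mod : i.val % 2 ≠ j.val % 2 := fun hmod => (hw i j hij hmod).not_gt hji
  by_cases hjk_mod : j.val % 2 = k.val % 2
  · exact (hw j k hjk hjk_mod).le
  · exact (hji.trans (hw i k (hij.trans hjk) (by omega))).le

theorem downUp_of_isShuffle_of_valley_lt_peak {w : Equiv.Perm (Fin (2 * l))}
    (hw : IsShuffle ((parityEquiv l).trans w))
    (h : ∀ i, w (parityEquiv l (U, i)) < w (parityEquiv l (D, i))) : DownUp w := by
  rw [isShuffle_parityEquiv_trans_iff] at hw
  have descent (i : ℕ) (hi : 2 * i + 1 < 2 * l) : w ⟨2 * i + 1, hi⟩ < w ⟨2 * i, by omega⟩ :=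
    h ⟨i, by omega⟩
  intro j hj
  obtain ⟨i, rfl | rfl⟩ := j.even_or_odd'
  · simpa using descent i hj
  · rw [if_neg (by omega)]
    have peaks_lt : w ⟨2 * i, by omega⟩ < w ⟨2 * i + 2, hj⟩ :=
      hw _ _ (Fin.mk_lt_mk.2 (by omega)) (Nat.add_mod_right _ 2).symm
    exact (descent i (by omega)).trans peaks_lt

theorem downUp_and_occ321_eq_empty_iff (w : Equiv.Perm (Fin (2 * l))) :
    DownUp w ∧ occ321 w = ∅ ↔ IsShuffle ((parityEquiv l).trans w) ∧
      ∀ i, w (parityEquiv l (U, i)) < w (parityEquiv l (D, i)) :=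
  ⟨fun ⟨hd, ho⟩ => ⟨hd.isShuffle ho, hd.valley_lt_peak⟩,
    fun ⟨hs, h⟩ =>
      ⟨downUp_of_isShuffle_of_valley_lt_peak hs h, occ321_eq_empty_of_isShuffle hs⟩⟩

theorem card_downUp_avoiding_321 (l : ℕ) :
    Nat.card {w : Equiv.Perm (Fin (2 * l)) // DownUp w ∧ occ321 w = ∅} = catalan l :=
  (Nat.card_congr (((parityEquiv l).symm.equivCongr (Equiv.refl _)).subtypeEquiv
    downUp_and_occ321_eq_empty_iff)).trans (card_isShuffle_U_lt_D l)

/-- The permutation `w` of `0, …, n - 1` followed by the new largest entry `n`. -/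
def appendLast (w : Equiv.Perm (Fin n)) : Equiv.Perm (Fin (n + 1)) :=
  finSuccEquivLast.symm.permCongr w.optionCongr

@[simp]
theorem appendLast_castSucc (w : Equiv.Perm (Fin n)) (i : Fin n) :
    appendLast w i.castSucc = (w i).castSucc := by
  simp [appendLast]

@[simp]
theorem appendLast_last (w : Equiv.Perm (Fin n)) : appendLast w (Fin.last n) = Fin.last n := by
  simp [appendLast]

theorem appendLast_injective : Function.Injective (appendLast (n := n)) :=
  (Equiv.injective _).comp Equiv.optionCongr_injective

theorem exists_appendLast_eq {w : Equiv.Perm (Fin (n + 1))} (hw : w (Fin.last n) = Fin.last n) :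
    ∃ u, appendLast u = w := by
  let w' : Equiv.Perm (Option (Fin n)) := finSuccEquivLast.permCongr w
  have hw' : w' none = none := by simp [w', hw]
  refine ⟨Equiv.removeNone w', ?_⟩
  rw [appendLast, map_equiv_removeNone, hw', Equiv.swap_self]
  ext i
  simp [w', Equiv.Perm.mul_apply]

theorem occ321_appendLast_eq_empty_iff (w : Equiv.Perm (Fin n)) :
    occ321 (appendLast w) = ∅ ↔ occ321 w = ∅ := by
  simp [occ321_eq_empty_iff, Fin.forall_fin_succ', Fin.le_last]

theorem downUp_appendLast_iff (hn : Even n) (w : Equiv.Perm (Fin n)) :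
    DownUp (appendLast w) ↔ DownUp w := by
  have appendLast_mk (i : ℕ) (h : i < n) : appendLast w ⟨i, by omega⟩ = (w ⟨i, h⟩).castSucc :=
    appendLast_castSucc w ⟨i, h⟩
  refine ⟨fun hw i hi => ?_, fun hw i hi => ?_⟩
  · simpa [appendLast_mk, hi, Nat.lt_of_succ_lt hi] using hw i (by omega)
  · obtain hlt | rfl : i + 1 < n ∨ i + 1 = n := by omega
    · simpa [appendLast_mk, hlt, Nat.lt_of_succ_lt hlt] using hw i hlt
    · rw [if_neg (by grind), appendLast_mk i (by omega)]
      exact (Fin.castSucc_lt_last _).trans_eq (appendLast_last w).symm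

theorem card_downUp_avoiding_321_last (hn : Even n) :
    Nat.card {w : Equiv.Perm (Fin (n + 1)) // DownUp w ∧ occ321 w = ∅ ∧
        w (Fin.last n) = Fin.last n} =
      Nat.card {w : Equiv.Perm (Fin n) // DownUp w ∧ occ321 w = ∅} := by
  refine (Nat.card_eq_of_bijective
    (fun u => ⟨appendLast u.1, (downUp_appendLast_iff hn u.1).2 u.2.1,
      (occ321_appendLast_eq_empty_iff u.1).2 u.2.2, appendLast_last u.1⟩) ⟨?_, ?_⟩).symm
  · exact fun u v h => Subtype.ext (appendLast_injective (congrArg Subtype.val h))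
  · rintro ⟨w, hd, ho, hw⟩
    obtain ⟨u, rfl⟩ := exists_appendLast_eq hw
    exact ⟨⟨u, (downUp_appendLast_iff hn u).1 hd, (occ321_appendLast_eq_empty_iff u).1 ho⟩, rfl⟩

theorem DownUp.apply_zero_ne_zero {w : Equiv.Perm (Fin (n + 2))} (hw : DownUp w) : w 0 ≠ 0 :=
  (Fin.zero_le _).trans_lt (hw 0 (by omega)) |>.ne'

end Permutations

theorem stmt12 (l : ℕ) (hl : 1 ≤ l) :
    Nat.card {w : Equiv.Perm (Fin (2 * l + 1)) // DownUp w ∧ occ321 w = ∅ ∧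
        w ⟨2 * l, by omega⟩ = ⟨2 * l, by omega⟩} = catalan l ∧
    Nat.card {w : Equiv.Perm (Fin (2 * l + 1)) // DownUp w ∧ occ321 w = ∅ ∧
        w ⟨0, by omega⟩ = ⟨0, by omega⟩} = 0 := by
  refine ⟨(card_downUp_avoiding_321_last (even_two_mul l)).trans (card_downUp_avoiding_321 l), ?_⟩
  obtain ⟨k, rfl⟩ := Nat.exists_eq_add_of_le' hl
  rw [Nat.card_eq_zero]
  exact .inl ⟨fun ⟨_, hd, _, h0⟩ => hd.apply_zero_ne_zero h0⟩
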